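/- Limited Belief Reasoning is sound and eventually complete with respect to classical reasoning: let KB be an objective formula in conjunctive normal form, α an objective formula, and F a finite set of function terms containing all function terms occurring in KB and α. Then the formula B₀ KB → B_{|F|} α is valid (⊨ˢ B₀ KB → B_{|F|} α) if and only if KB → α is classically valid (⊨ KB → α). -/

import Mathlib

/-! ## Limited belief: basic syntax and semantics (Schwering 2017, quantifier-free). -/

/-- Standard names (a countably infinite supply). -/
abbrev Name := ℕ

/-- Function terms `f(n₁,…,n_j)`: a function symbol applied to standard names. -/
structure FnTerm where
  sym : ℕ
  args : List Name
deriving DecidableEq, Inhabited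

/-- Literals `t ≈ n` (pos) and `t ≉ n` (neg). -/
inductive Lit where
  | pos (t : FnTerm) (n : Name)
  | neg (t : FnTerm) (n : Name)
deriving DecidableEq

instance : Inhabited Lit := ⟨.pos default 0⟩

/-- The left-hand side (function term) of a literal. -/
def Lit.lhs : Lit → FnTerm
  | .pos t _ => t
  | .neg t _ => t

/-- The right-hand side (standard name) of a literal. -/
def Lit.rhs : Lit → Name
  | .pos _ n => n
  | .neg _ n => n

/-- The negation `¬ℓ` of a literal. -/
def Lit.negate : Lit → Lit
  | .pos t n => .neg t n
  | .neg t n => .pos t n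

/-- Names occurring in a literal. -/
def Lit.names (ℓ : Lit) : Finset Name := insert ℓ.rhs ℓ.lhs.args.toFinset

/-- Two literals are complementary iff they are of the form `t ≈ n` and `t ≉ n`,
or of the form `t ≈ n` and `t ≈ n'` for distinct `n, n'`. -/
def Lit.complementary : Lit → Lit → Bool
  | .pos t n, .neg t' n' => t == t' && n == n'
  | .neg t n, .pos t' n' => t == t' && n == n'
  | .pos t n, .pos t' n' => t == t' && n != n'
  | .neg _ _, .neg _ _ => false

/-- A clause is a (finite) set of literals. -/
abbrev Clause := Finset Lit

/-- Unit propagation of clause `c` with literal `ℓ`: remove from `c` all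
literals complementary to `ℓ`. -/
def Clause.prop (c : Clause) (ℓ : Lit) : Clause :=
  c.filter (fun ℓ' => Lit.complementary ℓ' ℓ = false)

/-- `c₁` subsumes `c₂` iff for every `t ≈ n ∈ c₁`, `t ≈ n ∈ c₂` or `t ≉ n' ∈ c₂`
for some `n' ≠ n`, and for every `t ≉ n ∈ c₁`, `t ≉ n ∈ c₂`. -/
def Clause.subsumes (c₁ c₂ : Clause) : Prop :=
  (∀ t n, Lit.pos t n ∈ c₁ → Lit.pos t n ∈ c₂ ∨ ∃ n', n' ≠ n ∧ Lit.neg t n' ∈ c₂) ∧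
  (∀ t n, Lit.neg t n ∈ c₁ → Lit.neg t n ∈ c₂)

/-- `UP s`: the closure of the set of clauses `s` under unit propagation and
subsumption.  `UP s c` means `c ∈ UP(s)`. -/
inductive UP (s : Set Clause) : Clause → Prop
  | mem {c : Clause} : c ∈ s → UP s c
  | unit {c : Clause} {ℓ : Lit} : UP s {ℓ} → UP s c → UP s (c.prop ℓ)
  | sub {c₁ c₂ : Clause} : UP s c₁ → c₁.subsumes c₂ → UP s c₂

/-- Objective formulas: literals (`atom` is `t ≈ n`, `not atom` is `t ≉ n`),
negation and disjunction. -/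
inductive Form where
  | atom (t : FnTerm) (n : Name)
  | not (φ : Form)
  | or (φ ψ : Form)
deriving DecidableEq

/-- `α ∧ β` abbreviates `¬(¬α ∨ ¬β)`. -/
def Form.and (φ ψ : Form) : Form := .not (.or (.not φ) (.not ψ))

/-- `α → β` abbreviates `¬α ∨ β`. -/
def Form.imp (φ ψ : Form) : Form := .or (.not φ) ψ

/-- A formula is (syntactically) a clause iff it is a disjunction of literals. -/
def Form.isClause : Form → Bool
  | .atom _ _ => true
  | .not (.atom _ _) => true
  | .not _ => false
  | .or φ ψ => φ.isClause && ψ.isClause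

/-- The set of literals of a clause-formula. -/
def Form.lits : Form → Clause
  | .atom t n => {Lit.pos t n}
  | .not (.atom t n) => {Lit.neg t n}
  | .not _ => ∅
  | .or φ ψ => φ.lits ∪ ψ.lits

/-- The limited-belief truth relation `s ⊨ˢ α` for objective formulas:
a clause is true iff it is in `UP(s)`; a non-clause disjunction is true iff one
of its disjuncts is; `¬(α ∨ β)` is true iff `¬α` and `¬β` are; `¬¬α` is true
iff `α` is. -/
def sat (s : Set Clause) : Form → Prop
  | .atom t n => UP s {Lit.pos t n}
  | .not (.atom t n) => UP s {Lit.neg t n}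
  | .not (.not φ) => sat s φ
  | .not (.or φ ψ) => sat s (.not φ) ∧ sat s (.not ψ)
  | .or φ ψ => if (Form.or φ ψ).isClause then UP s (Form.or φ ψ).lits
               else sat s φ ∨ sat s ψ

/-- `satB s k α` is `s ⊨ˢ B_k α`: `B₀ α` holds iff `α` does, and `B_{k+1} α`
holds iff for some function term `t`, for all names `n`,
`s ∪ {t ≈ n} ⊨ˢ B_k α`. -/
def satB (s : Set Clause) : ℕ → Form → Prop
  | 0, φ => sat s φ
  | k+1, φ => ∃ t : FnTerm, ∀ n : Name, satB (s ∪ {({Lit.pos t n} : Clause)}) k φ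

/-- A world maps function terms to standard names. -/
abbrev World := FnTerm → Name

/-- Classical truth of a literal in a world. -/
def Lit.holds (w : World) : Lit → Prop
  | .pos t n => w t = n
  | .neg t n => w t ≠ n

/-- Classical truth of a clause in a world. -/
def Clause.holds (w : World) (c : Clause) : Prop := ∃ ℓ ∈ c, ℓ.holds w

/-- Classical truth of an objective formula in a world. -/
def wsat (w : World) : Form → Prop
  | .atom t n => w t = n
  | .not φ => ¬ wsat w φ
  | .or φ ψ => wsat w φ ∨ wsat w ψ

/-- Classical entailment `s ⊨ α`. -/
def entails (s : Set Clause) (φ : Form) : Prop :=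
  ∀ w : World, (∀ c ∈ s, c.holds w) → wsat w φ

/-- Classical entailment of a clause (disjunction of its literals). -/
def entailsClause (s : Set Clause) (c : Clause) : Prop :=
  ∀ w : World, (∀ c' ∈ s, c'.holds w) → c.holds w

/-- Function terms mentioned in a formula. -/
def Form.terms : Form → Finset FnTerm
  | .atom t _ => {t}
  | .not φ => φ.terms
  | .or φ ψ => φ.terms ∪ ψ.terms

/-- Standard names mentioned in a formula. -/
def Form.names : Form → Finset Name
  | .atom t n => insert n t.args.toFinset
  | .not φ => φ.names
  | .or φ ψ => φ.names ∪ ψ.names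
/-- CNF formulas: clauses, or conjunctions of CNF formulas. -/
inductive IsCNF : Form → Prop
  | clause {φ : Form} : φ.isClause = true → IsCNF φ
  | and {φ ψ : Form} : IsCNF φ → IsCNF ψ → IsCNF (Form.and φ ψ)

/-- The set of clauses of a CNF formula. -/
def Form.cnfClauses : Form → Set Clause
  | .not (.or (.not φ) (.not ψ)) => φ.cnfClauses ∪ ψ.cnfClauses
  | φ => if φ.isClause then {φ.lits} else ∅

/-- The formula corresponding to a literal. -/
def Lit.toForm : Lit → Form
  | .pos t n => .atom t n
  | .neg t n => .not (.atom t n)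

/-- `⋁_{ℓ ∈ ls} ℓ ∨ base`. -/
def Form.bigOrLits (ls : List Lit) (base : Form) : Form :=
  ls.foldr (fun ℓ acc => Form.or ℓ.toForm acc) base

/-- The disjunction of a nonempty list of literals (junk on the empty list). -/
def Form.bigOr : List Lit → Form
  | [] => Form.atom default 0
  | [ℓ] => ℓ.toForm
  | ℓ :: ℓ' :: ls => Form.or ℓ.toForm (Form.bigOr (ℓ' :: ls))

/-- The split-early gadget `s_k`: the least set including `s` that, for every
`ℓ ∈ L`, contains the clauses `¬ℓ ∨ c^ord`, `ℓ ∨ ℓʷ₁ ∨ … ∨ ℓʷ_{k-1} ∨ c^ord`,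
and `ℓ ∨ ¬ℓʷ_i ∨ c^ord` for each `i`, where `c^ord = ℓᵒ₁ ∨ … ∨ ℓᵒ_k`. -/
def gadget (s : Set Clause) (L : List Lit) (lws los : List Lit) : Set Clause :=
  s ∪ {c | ∃ ℓ ∈ L,
        c = insert ℓ.negate los.toFinset ∨
        c = insert ℓ (lws.toFinset ∪ los.toFinset) ∨
        ∃ ℓw ∈ lws, c = insert ℓ (insert ℓw.negate los.toFinset)}

theorem aux_lits_holds (w : World) : ∀ φ : Form, φ.isClause = true →
    (Clause.holds w φ.lits ↔ wsat w φ)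
  | .atom t n, _ => by simp [Form.lits, Clause.holds, Lit.holds, wsat]
  | .not (.atom t n), _ => by simp [Form.lits, Clause.holds, Lit.holds, wsat]
  | .not (.not _), h => by simp [Form.isClause] at h
  | .not (.or _ _), h => by simp [Form.isClause] at h
  | .or φ ψ, h => by
    simp only [Form.isClause, Bool.and_eq_true] at h
    have h1 := aux_lits_holds w φ h.1
    have h2 := aux_lits_holds w ψ h.2
    simp only [wsat, ← h1, ← h2, Clause.holds, Form.lits, Finset.mem_union]
    constructor
    · rintro ⟨l, hl | hl, h⟩
      · exact Or.inl ⟨l, hl, h⟩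
      · exact Or.inr ⟨l, hl, h⟩
    · rintro (⟨l, hl, h⟩ | ⟨l, hl, h⟩)
      · exact ⟨l, Or.inl hl, h⟩
      · exact ⟨l, Or.inr hl, h⟩

theorem aux_lits_terms : ∀ φ : Form, ∀ l ∈ φ.lits, l.lhs ∈ φ.terms
  | .atom t n => by simp [Form.lits, Form.terms, Lit.lhs]
  | .not (.atom t n) => by simp [Form.lits, Form.terms, Lit.lhs]
  | .not (.not _) => by simp [Form.lits]
  | .not (.or _ _) => by simp [Form.lits]
  | .or φ ψ => by
    intro l hl
    simp only [Form.lits, Form.terms, Finset.mem_union] at hl ⊢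
    exact hl.imp (aux_lits_terms φ l) (aux_lits_terms ψ l)

theorem aux_compl_false (w : World) (l m : Lit) (hl : l.holds w) (hm : m.holds w) :
    Lit.complementary l m = false := by
  cases l <;> cases m <;> simp [Lit.complementary, Lit.holds] at * <;> grind

theorem aux_UP_sound (w : World) (s : Set Clause) (hs : ∀ c ∈ s, Clause.holds w c)
    (c : Clause) (h : UP s c) : Clause.holds w c := by
  induction h with
  | mem h => exact hs _ h
  | unit _ _ h1 h2 =>
    obtain ⟨l, hl, hlw⟩ := h1
    obtain ⟨m, hm, hmw⟩ := h2
    rw [Finset.mem_singleton] at hl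
    subst hl
    exact ⟨m, Finset.mem_filter.2 ⟨hm, aux_compl_false w m l hmw hlw⟩, hmw⟩
  | sub _ hsub h1 =>
    obtain ⟨l, hl, hlw⟩ := h1
    cases l with
    | pos t n =>
      rcases hsub.1 t n hl with h | ⟨n', hn, h⟩
      · exact ⟨_, h, hlw⟩
      · refine ⟨_, h, ?_⟩
        simp only [Lit.holds] at *
        grind
    | neg t n => exact ⟨_, hsub.2 t n hl, hlw⟩

theorem aux_UP_mono {s s' : Set Clause} (hs : s ⊆ s') {c : Clause} (h : UP s c) : UP s' c := by
  induction h with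
  | mem h => exact .mem (hs h)
  | unit _ _ h1 h2 => exact .unit h1 h2
  | sub _ h h1 => exact .sub h1 h

theorem aux_subset {s : Set Clause} {c d : Clause} (h : UP s c) (hcd : c ⊆ d) : UP s d :=
  .sub h ⟨fun _ _ h => Or.inl (hcd h), fun _ _ h => hcd h⟩

/-- monotonicity of `sat`, both polarities -/
theorem aux_sat_mono {s s' : Set Clause} (hs : s ⊆ s') (φ : Form) :
    (sat s φ → sat s' φ) ∧ (sat s (.not φ) → sat s' (.not φ)) := by
  induction φ with
  | atom t n =>
    simp only [sat]
    exact ⟨aux_UP_mono hs, aux_UP_mono hs⟩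
  | not φ ih =>
    refine ⟨ih.2, ?_⟩
    simp only [sat]
    exact ih.1
  | or φ ψ ih1 ih2 =>
    constructor
    · simp only [sat]
      split_ifs
      · exact aux_UP_mono hs
      · exact Or.imp ih1.1 ih2.1
    · simp only [sat]
      exact And.imp ih1.2 ih2.2

theorem aux_sat_empty {s : Set Clause} (h : UP s ∅) (φ : Form) :
    sat s φ ∧ sat s (.not φ) := by
  have hc : ∀ c, UP s c := fun c => aux_subset h (Finset.empty_subset c)
  induction φ with
  | atom t n =>
    simp only [sat]
    exact ⟨hc _, hc _⟩
  | not φ ih =>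
    refine ⟨ih.2, ?_⟩
    simp only [sat]
    exact ih.1
  | or φ ψ ih1 ih2 =>
    constructor
    · simp only [sat]
      split_ifs
      · exact hc _
      · exact Or.inl ih1.1
    · simp only [sat]
      exact ⟨ih1.2, ih2.2⟩

theorem aux_lit_up {s : Set Clause} {w : World} {l : Lit}
    (hu : UP s {Lit.pos l.lhs (w l.lhs)}) (hl : l.holds w) : UP s {l} := by
  cases l with
  | pos t n =>
    simp only [Lit.holds, Lit.lhs] at *
    subst hl
    exact hu
  | neg t n =>
    simp only [Lit.holds, Lit.lhs] at *
    refine .sub hu ⟨?_, ?_⟩ <;> simp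
    grind

theorem aux_sat_complete {s : Set Clause} {w : World} (φ : Form)
    (hu : ∀ t ∈ φ.terms, UP s {Lit.pos t (w t)}) :
    (wsat w φ → sat s φ) ∧ (¬ wsat w φ → sat s (.not φ)) := by
  induction φ with
  | atom t n =>
    have := hu t (by simp [Form.terms])
    simp only [sat, wsat]
    exact ⟨fun h => aux_lit_up (l := .pos t n) this h,
      fun h => aux_lit_up (l := .neg t n) this h⟩
  | not φ ih =>
    have ih := ih hu
    refine ⟨ih.2, ?_⟩
    simp only [sat, wsat, not_not]
    exact ih.1
  | or φ ψ ih1 ih2 =>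
    have ih1 := ih1 fun t ht => hu t (by simp [Form.terms, ht])
    have ih2 := ih2 fun t ht => hu t (by simp [Form.terms, ht])
    constructor
    · intro h
      simp only [sat]
      split_ifs with hc
      · obtain ⟨l, hl, hlw⟩ := (aux_lits_holds w _ hc).2 h
        exact aux_subset (aux_lit_up (hu _ (aux_lits_terms _ l hl)) hlw) (by simpa using hl)
      · exact Or.imp ih1.1 ih2.1 h
    · simp only [sat, wsat, not_or]
      exact And.imp ih1.2 ih2.2

theorem aux_refute {s : Set Clause} {w : World} (c : Clause)
    (hc : ∀ l ∈ c, UP s {Lit.pos l.lhs (w l.lhs)} ∧ ¬ l.holds w) (h : UP s c) : UP s ∅ := by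
  induction c using Finset.strongInduction with
  | H c ih =>
    rcases c.eq_empty_or_nonempty with rfl | ⟨l, hl⟩
    · exact h
    · obtain ⟨h1, h2⟩ := hc l hl
      refine ih (Clause.prop c (Lit.pos l.lhs (w l.lhs))) ?_ ?_ (.unit h1 h)
      · refine Finset.filter_ssubset.2 ⟨l, hl, ?_⟩
        cases l <;> simp [Lit.complementary, Lit.holds, Lit.lhs] at * <;> grind
      · intro m hm
        exact hc m (Finset.mem_filter.1 hm).1

theorem aux_sat_refute {s : Set Clause} {w : World} (φ : Form)
    (hu : ∀ t ∈ φ.terms, UP s {Lit.pos t (w t)}) :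
    (sat s φ → ¬ wsat w φ → UP s ∅) ∧ (sat s (.not φ) → wsat w φ → UP s ∅) := by
  induction φ with
  | atom t n =>
    have := hu t (by simp [Form.terms])
    simp only [sat, wsat]
    refine ⟨fun h hn => aux_refute (w := w) _ ?_ h, fun h hn => aux_refute (w := w) _ ?_ h⟩
    · simpa [Lit.lhs, Lit.holds] using ⟨this, hn⟩
    · simpa [Lit.lhs, Lit.holds] using ⟨this, hn⟩
  | not φ ih =>
    have ih := ih hu
    simp only [sat, wsat, not_not]
    exact ⟨ih.2, ih.1⟩
  | or φ ψ ih1 ih2 =>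
    have ih1 := ih1 fun t ht => hu t (by simp [Form.terms, ht])
    have ih2 := ih2 fun t ht => hu t (by simp [Form.terms, ht])
    constructor
    · intro h hn
      simp only [sat] at h
      split_ifs at h with hc
      · refine aux_refute (w := w) _ (fun l hl => ⟨hu _ (aux_lits_terms _ l hl), fun hlw => ?_⟩) h
        exact hn ((aux_lits_holds w _ hc).1 ⟨l, hl, hlw⟩)
      · simp only [wsat, not_or] at hn
        exact h.elim (fun h => ih1.1 h hn.1) (fun h => ih2.1 h hn.2)
    · simp only [sat, wsat]
      rintro ⟨h1, h2⟩ (h | h)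
      · exact ih1.2 h1 h
      · exact ih2.2 h2 h

theorem aux_satB_sound (w : World) (φ : Form) (k : ℕ) : ∀ s : Set Clause,
    (∀ t, ({Lit.pos t (w t)} : Clause) ∈ s) → (∀ c ∈ s, Clause.holds w c) →
    satB s k φ → wsat w φ := by
  induction k with
  | zero =>
    intro s h1 h2 h
    by_contra hn
    obtain ⟨l, hl, _⟩ := aux_UP_sound w s h2 ∅
      ((aux_sat_refute φ fun t _ => .mem (h1 t)).1 h hn)
    simp at hl
  | succ k ih =>
    intro s h1 h2 h
    obtain ⟨t, ht⟩ := h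
    refine ih _ (fun t => Or.inl (h1 t)) ?_ (ht (w t))
    rintro c (hc | hc)
    · exact h2 c hc
    · rw [Set.mem_singleton_iff] at hc
      subst hc
      exact ⟨_, Finset.mem_singleton_self _, rfl⟩

theorem aux_satB_split (φ : Form) (F : Finset FnTerm) : ∀ s : Set Clause,
    (∀ w : World, sat (s ∪ {c | ∃ t ∈ F, c = {Lit.pos t (w t)}}) φ) → satB s F.card φ := by
  induction F using Finset.induction_on with
  | empty =>
    intro s h
    simpa [satB] using h fun _ => 0
  | insert t F ht ih =>
    intro s h
    rw [Finset.card_insert_of_notMem ht]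
    refine ⟨t, fun n => ih _ fun w => (aux_sat_mono ?_ φ).1 (h (Function.update w t n))⟩
    rintro c (hc | ⟨u, hu, rfl⟩)
    · exact Or.inl (Or.inl hc)
    · rcases Finset.mem_insert.1 hu with rfl | hu'
      · left; right
        simp
      · right
        refine ⟨u, hu', ?_⟩
        rw [Function.update_of_ne]
        rintro rfl
        exact ht hu'

theorem lbr_sound_eventually_complete (KB α : Form) (hKB : IsCNF KB)
    (F : Finset FnTerm) (hKBF : KB.terms ⊆ F) (hαF : α.terms ⊆ F) :
    (∀ s' : Set Clause, satB s' 0 KB → satB s' F.card α) ↔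
      (∀ w : World, wsat w (Form.imp KB α)) := by
  constructor
  · intro h w
    simp only [Form.imp, wsat]
    rw [← imp_iff_not_or]
    intro hk
    refine aux_satB_sound w α F.card {c | ∃ t, c = {Lit.pos t (w t)}} (fun t => ⟨t, rfl⟩) ?_
      (h _ ((aux_sat_complete (s := {c | ∃ t, c = {Lit.pos t (w t)}}) KB
        fun t _ => .mem ⟨t, rfl⟩).1 hk))
    rintro c ⟨t, rfl⟩
    exact ⟨_, Finset.mem_singleton_self _, rfl⟩
  · intro h s hs
    refine aux_satB_split α F s fun w => ?_
    have hu : ∀ t ∈ F, UP (s ∪ {c | ∃ t ∈ F, c = {Lit.pos t (w t)}}) {Lit.pos t (w t)} :=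
      fun t ht => .mem (Or.inr ⟨t, ht, rfl⟩)
    rcases h w with hk | ha
    · exact (aux_sat_empty ((aux_sat_refute KB fun t ht => hu t (hKBF ht)).1
        ((aux_sat_mono Set.subset_union_left KB).1 hs) hk) α).1
    · exact (aux_sat_complete α fun t ht => hu t (hαF ht)).1 ha
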